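/- arXiv:1408.2992 — 3 statements merged into one kernel-verified Lean document; each statement's English description precedes it below -/
import Mathlib

section
/- Let f : ℝ → ℝ be a continuous convex function satisfying an exponential growth condition: there exist C ≥ 0 and a ≥ 0 with |f(y)| ≤ C·exp(a|y|) for all y. Let x ∈ ℝ, t > 0, and 0 < σ ≤ ρ. Then ∫ f d(N(x, σ²t)) ≤ ∫ f d(N(x, ρ²t)), where N(m, s) denotes the Gaussian measure on ℝ with mean m and variance s. -/
open MeasureTheory ProbabilityTheory

lemma integrable_gaussian_of_growth (f : ℝ → ℝ) (hf_cont : Continuous f)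
    (C a : ℝ) (hf_growth : ∀ y : ℝ, |f y| ≤ C * Real.exp (a * |y|))
    (m : ℝ) (v : NNReal) : Integrable f (gaussianReal m v) := by
  have h : Integrable (fun y : ℝ => Real.exp (a * |y|)) (gaussianReal m v) :=
    integrable_exp_mul_abs (X := fun y : ℝ => y) (integrable_exp_mul_gaussianReal a)
      (integrable_exp_mul_gaussianReal (-a))
  exact (h.const_mul C).mono' hf_cont.aestronglyMeasurable
    (Filter.Eventually.of_forall fun y => by simpa using hf_growth y)

/-- Hajek's comparison, constant-coefficient univariate driftless case: for a continuous
convex `f` of exponential growth and `0 < σ ≤ ρ`, the Gaussian mean of `f` with variance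
`σ²t` is at most the one with variance `ρ²t`. -/
theorem gaussian_convex_comparison_no_drift
    (f : ℝ → ℝ) (hf_cont : Continuous f) (hf_conv : ConvexOn ℝ Set.univ f)
    (C a : ℝ) (hC : 0 ≤ C) (ha : 0 ≤ a)
    (hf_growth : ∀ y : ℝ, |f y| ≤ C * Real.exp (a * |y|))
    (x t σ ρ : ℝ) (ht : 0 < t) (hσ : 0 < σ) (hσρ : σ ≤ ρ) :
    ∫ y, f y ∂(gaussianReal x (σ ^ 2 * t).toNNReal)
      ≤ ∫ y, f y ∂(gaussianReal x (ρ ^ 2 * t).toNNReal) := by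
  have hint := integrable_gaussian_of_growth f hf_cont C a hf_growth
  have hle : (σ ^ 2 * t).toNNReal ≤ (ρ ^ 2 * t).toNNReal := by
    apply Real.toNNReal_le_toNNReal
    gcongr
  obtain ⟨w, hw⟩ := exists_add_of_le hle
  generalize (σ ^ 2 * t).toNNReal = v at *
  have hconv : gaussianReal x (ρ ^ 2 * t).toNNReal
      = ((gaussianReal x v).prod (gaussianReal 0 w)).map (fun p : ℝ × ℝ => p.1 + p.2) := by
    have := gaussianReal_conv_gaussianReal (m₁ := x) (m₂ := 0) (v₁ := v) (v₂ := w)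
    rw [add_zero, ← hw] at this
    exact this.symm
  have hmeas : Measurable (fun p : ℝ × ℝ => p.1 + p.2) := by fun_prop
  have hI : Integrable (fun p : ℝ × ℝ => f (p.1 + p.2))
      ((gaussianReal x v).prod (gaussianReal 0 w)) := by
    have := hint x (ρ ^ 2 * t).toNNReal
    rw [hconv] at this
    exact this.comp_measurable hmeas
  rw [hconv, integral_map hmeas.aemeasurable hf_cont.aestronglyMeasurable,
    integral_prod _ hI]
  refine integral_mono (hint x v) hI.integral_prod_left fun z => ?_
  have hz : gaussianReal z w = (gaussianReal 0 w).map (fun y => z + y) := by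
    rw [gaussianReal_map_const_add]; simp
  have hj := hf_conv.map_integral_le (μ := gaussianReal z w) (f := fun y : ℝ => y)
    hf_cont.continuousOn isClosed_univ (by simp)
    ((memLp_id_gaussianReal 1).integrable (by simp)) (hint z w)
  rw [integral_id_gaussianReal, hz,
    integral_map (by fun_prop) hf_cont.aestronglyMeasurable] at hj
  exact hj
end

section
/- Let f : ℝ → ℝ be a continuous, nondecreasing, convex function satisfying an exponential growth condition: there exist C ≥ 0 and a ≥ 0 with |f(y)| ≤ C·exp(a|y|) for all y. Let x ∈ ℝ, t > 0, μ ≤ ν real numbers, and 0 < σ ≤ ρ. Then ∫ f d(N(x + μt, σ²t)) ≤ ∫ f d(N(x + νt, ρ²t)), where N(m, s) denotes the Gaussian measure on ℝ with mean m and variance s. -/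
open MeasureTheory ProbabilityTheory

lemma integrable_gauss_of_growth (f : ℝ → ℝ) (hf_cont : Continuous f)
    (C a : ℝ) (hC : 0 ≤ C) (ha : 0 ≤ a)
    (hf_growth : ∀ y : ℝ, |f y| ≤ C * Real.exp (a * |y|)) (m : ℝ) (v : NNReal) :
    Integrable f (gaussianReal m v) := by
  have h : Integrable (fun y => C * (Real.exp (a * y) + Real.exp (-a * y))) (gaussianReal m v) :=
    ((integrable_exp_mul_gaussianReal a).add (integrable_exp_mul_gaussianReal (-a))).const_mul C
  refine h.mono' hf_cont.aestronglyMeasurable (Filter.Eventually.of_forall fun y => ?_)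
  refine (hf_growth y).trans (mul_le_mul_of_nonneg_left ?_ hC)
  have h1 := Real.exp_pos (a * y)
  have h2 := Real.exp_pos (-a * y)
  rcases abs_cases y with ⟨h, _⟩ | ⟨h, _⟩ <;> rw [h]
  · linarith
  · rw [mul_neg, ← neg_mul]; linarith

/-- Constant-coefficient univariate comparison with drift: for a continuous, nondecreasing,
convex `f` of exponential growth, `μ ≤ ν` and `0 < σ ≤ ρ`, the Gaussian mean of `f` with
mean `x + μt` and variance `σ²t` is dominated by the one with mean `x + νt` and variance
`ρ²t`. -/
theorem gaussian_convex_comparison_with_drift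
    (f : ℝ → ℝ) (hf_cont : Continuous f) (hf_mono : Monotone f)
    (hf_conv : ConvexOn ℝ Set.univ f)
    (C a : ℝ) (hC : 0 ≤ C) (ha : 0 ≤ a)
    (hf_growth : ∀ y : ℝ, |f y| ≤ C * Real.exp (a * |y|))
    (x t μ ν σ ρ : ℝ) (ht : 0 < t) (hμν : μ ≤ ν) (hσ : 0 < σ) (hσρ : σ ≤ ρ) :
    ∫ y, f y ∂(gaussianReal (x + μ * t) (σ ^ 2 * t).toNNReal)
      ≤ ∫ y, f y ∂(gaussianReal (x + ν * t) (ρ ^ 2 * t).toNNReal) := by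
  have hint := integrable_gauss_of_growth f hf_cont C a hC ha hf_growth
  have hsq : σ ^ 2 ≤ ρ ^ 2 := by gcongr
  set w := ((ρ ^ 2 - σ ^ 2) * t).toNNReal
  set v := (σ ^ 2 * t).toNNReal
  set m := x + μ * t
  have hG : gaussianReal (x + ν * t) (ρ ^ 2 * t).toNNReal
      = (gaussianReal m v).conv (gaussianReal ((ν - μ) * t) w) := by
    rw [gaussianReal_conv_gaussianReal]
    congr 1
    · simp only [m]; ring
    · simp only [v, w]
      rw [← Real.toNNReal_add (by positivity) (mul_nonneg (by linarith) ht.le)]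
      congr 1; ring
  have hI := hint (x + ν * t) (ρ ^ 2 * t).toNNReal
  rw [hG] at hI ⊢
  have hI2 : Integrable (fun p : ℝ × ℝ => f (p.1 + p.2))
      ((gaussianReal m v).prod (gaussianReal ((ν - μ) * t) w)) := by
    unfold Measure.conv at hI
    exact (integrable_map_measure hf_cont.aestronglyMeasurable (by fun_prop)).1 hI
  rw [integral_conv hI]
  refine integral_mono (hint _ _) hI2.integral_prod_left fun y => ?_
  have hid : Integrable (fun z : ℝ => z) (gaussianReal ((ν - μ) * t) w) :=
    (memLp_id_gaussianReal 1).integrable (by simp)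
  have hyz : Integrable (fun z : ℝ => f (y + z)) (gaussianReal ((ν - μ) * t) w) := by
    have := hint (y + (ν - μ) * t) w
    rw [add_comm y, ← gaussianReal_map_const_add] at this
    exact (integrable_map_measure hf_cont.aestronglyMeasurable (by fun_prop)).1 this
  have hJ := hf_conv.map_integral_le (f := fun z => y + z) hf_cont.continuousOn isClosed_univ
    (by simp) ((integrable_const y).add hid) hyz
  rw [integral_add (integrable_const y) hid, integral_id_gaussianReal] at hJ
  simp at hJ
  exact (hf_mono (by nlinarith [mul_nonneg (sub_nonneg.2 hμν) ht.le])).trans hJ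
end

section
/- Let n ≥ 1, let A, B be symmetric positive semidefinite real n×n matrices with B − A positive semidefinite, let c ∈ ℝⁿ with cᵀAc > 0, let m ∈ ℝ, t > 0, and let f : ℝ → ℝ be a continuous convex function with |f(y)| ≤ C·exp(a|y|) for some C, a ≥ 0 and all y. Then ∫ f d(N(m, t·cᵀAc)) ≤ ∫ f d(N(m, t·cᵀBc)), where N(m, s) denotes the Gaussian measure on ℝ with mean m and variance s. In particular, for constant dispersion matrices σ, ρ with σσᵀ = A and ρρᵀ = B, the processes X(t) = x + σW(t) and Y(t) = x + ρW(t) satisfy E^x[f(∑_i c_i X_i(t))] ≤ E^x[f(∑_i c_i Y_i(t))] since ∑_i c_i X_i(t) ∼ N(∑_i c_i x_i, t·cᵀσσᵀc). -/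
open MeasureTheory ProbabilityTheory Matrix

lemma integrable_gaussianReal_of_exp_growth (m : ℝ) (v : NNReal)
    (f : ℝ → ℝ) (hf : Continuous f) (C a : ℝ)
    (hg : ∀ y : ℝ, |f y| ≤ C * Real.exp (a * |y|)) : Integrable f (gaussianReal m v) := by
  have h : Integrable (fun y : ℝ => C * Real.exp (a * |y|)) (gaussianReal m v) :=
    (integrable_exp_mul_abs (X := fun y : ℝ => y) (integrable_exp_mul_gaussianReal a)
      (integrable_exp_mul_gaussianReal (-a))).const_mul C
  exact h.mono' hf.aestronglyMeasurable (Filter.Eventually.of_forall hg)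

lemma gaussianReal_convex_mono (m : ℝ) (v w : NNReal)
    (f : ℝ → ℝ) (hf : Continuous f) (hconv : ConvexOn ℝ Set.univ f)
    (hint : ∀ (m : ℝ) (v : NNReal), Integrable f (gaussianReal m v)) :
    ∫ y, f y ∂(gaussianReal m v) ≤ ∫ y, f y ∂(gaussianReal m (v + w)) := by
  have hc : (gaussianReal m v) ∗ (gaussianReal 0 w) = gaussianReal m (v + w) := by
    rw [gaussianReal_conv_gaussianReal, add_zero]
  have hi : Integrable f ((gaussianReal m v) ∗ (gaussianReal 0 w)) := hc ▸ hint m (v + w)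
  have hp : Integrable (fun p : ℝ × ℝ => f (p.1 + p.2))
      ((gaussianReal m v).prod (gaussianReal 0 w)) := by
    rw [Measure.conv] at hi
    exact (integrable_map_measure hf.aestronglyMeasurable (by fun_prop)).1 hi
  rw [← hc, integral_conv hi]
  refine integral_mono (hint m v) hp.integral_prod_left fun x => ?_
  have hmap : (gaussianReal 0 w).map (fun y => x + y) = gaussianReal x w := by
    rw [gaussianReal_map_const_add, zero_add]
  have he : ∫ y, f (x + y) ∂(gaussianReal 0 w) = ∫ y, f y ∂(gaussianReal x w) := by
    rw [← hmap, integral_map (by fun_prop) hf.aestronglyMeasurable]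
  have hj := hconv.map_integral_le (μ := gaussianReal x w) (f := fun y : ℝ => y)
    hf.continuousOn isClosed_univ (by simp)
    ((memLp_id_gaussianReal 1).integrable (by simp)) (hint x w)
  rw [integral_id_gaussianReal] at hj
  change f x ≤ ∫ y, f (x + y) ∂(gaussianReal 0 w)
  rw [he]
  exact hj

/-- Constant-coefficient multivariate instance of Theorem 1: for symmetric positive
semidefinite matrices `A ≤ B` (i.e. `B - A` positive semidefinite), `cᵀAc > 0`, `t > 0`,
and a continuous convex `f` of exponential growth, the Gaussian mean of `f` with variance
`t·cᵀAc` is at most the one with variance `t·cᵀBc`.  This gives the comparison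
`E^x[f(∑ cᵢXᵢ(t))] ≤ E^x[f(∑ cᵢYᵢ(t))]` for `X(t) = x + σW(t)`, `Y(t) = x + ρW(t)` with
`σσᵀ = A`, `ρρᵀ = B`, since `∑ cᵢXᵢ(t) ∼ N(∑ cᵢxᵢ, t·cᵀσσᵀc)`. -/
theorem gaussian_convex_comparison_matrix_variance
    (n : ℕ) (hn : 1 ≤ n) (A B : Matrix (Fin n) (Fin n) ℝ)
    (hA_symm : A.IsSymm) (hB_symm : B.IsSymm)
    (hA_psd : ∀ y : Fin n → ℝ, 0 ≤ y ⬝ᵥ A.mulVec y)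
    (hB_psd : ∀ y : Fin n → ℝ, 0 ≤ y ⬝ᵥ B.mulVec y)
    (hBA_psd : ∀ y : Fin n → ℝ, 0 ≤ y ⬝ᵥ (B - A).mulVec y)
    (c : Fin n → ℝ) (hc : 0 < c ⬝ᵥ A.mulVec c)
    (m t : ℝ) (ht : 0 < t)
    (f : ℝ → ℝ) (hf_cont : Continuous f) (hf_conv : ConvexOn ℝ Set.univ f)
    (C a : ℝ) (hC : 0 ≤ C) (ha : 0 ≤ a)
    (hf_growth : ∀ y : ℝ, |f y| ≤ C * Real.exp (a * |y|)) :
    ∫ y, f y ∂(gaussianReal m (t * (c ⬝ᵥ A.mulVec c)).toNNReal)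
      ≤ ∫ y, f y ∂(gaussianReal m (t * (c ⬝ᵥ B.mulVec c)).toNNReal) := by
  have hle : c ⬝ᵥ A.mulVec c ≤ c ⬝ᵥ B.mulVec c := by
    have h := hBA_psd c
    rw [Matrix.sub_mulVec, dotProduct_sub] at h
    linarith
  have hle2 : (t * (c ⬝ᵥ A.mulVec c)).toNNReal ≤ (t * (c ⬝ᵥ B.mulVec c)).toNNReal :=
    Real.toNNReal_le_toNNReal (mul_le_mul_of_nonneg_left hle ht.le)
  have key := gaussianReal_convex_mono m (t * (c ⬝ᵥ A.mulVec c)).toNNReal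
    ((t * (c ⬝ᵥ B.mulVec c)).toNNReal - (t * (c ⬝ᵥ A.mulVec c)).toNNReal) f hf_cont hf_conv
    (fun m v => integrable_gaussianReal_of_exp_growth m v f hf_cont C a hf_growth)
  rwa [add_tsub_cancel_of_le hle2] at key
end
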